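/- Let p be a prime and let f(n,p) = ρ(n,p)·(n/p)^(1 − φ(p)/p) = ρ(n,p)·(n/p)^(1/p). For every integer b with 0 ≤ b ≤ ⌊(p−1)/2⌋, the sequence a ↦ f(ap + b, p) is strictly increasing for integers a ≥ 0, i.e. f(ap+b, p) < f((a+1)p + b, p) for all integers a ≥ 0. -/

import Mathlib

/-- `rho n m` is the proportion of permutations in `Sym(n)` whose order is coprime to `m`.
Note that `rho 0 m = 1`. -/
noncomputable def rho (n m : ℕ) : ℝ :=
  (Finset.univ.filter (fun π : Equiv.Perm (Fin n) => Nat.Coprime (orderOf π) m)).card /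
    (Nat.factorial n : ℝ)

/-- `f n p = ρ(n,p) · (n/p)^(1 − φ(p)/p)`. -/
noncomputable def f (n p : ℕ) : ℝ :=
  rho n p * ((n : ℝ) / p) ^ ((1 : ℝ) - (Nat.totient p : ℝ) / p)

/-!
Write `n = ∑ k * mₖ` for the cycle type of a permutation of `n` points and remove one `k`-cycle:
the cycle index `Zₙ` at weights `w` satisfies `n * Zₙ = ∑ k ∈ [1, n], w k * Zₙ₋ₖ`. Taking for `w`
the indicator of the lengths coprime to `m` makes `Zₙ = ρ(n, m)`. For a prime `p`, subtracting the
recurrences at `n` and `n + p`, and then consecutive instances of the result, gives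
`(n + p + 1) * (ρ(n + p + 1) - ρ(n + p)) = n * (ρ(n + 1) - ρ(n))`. Hence `ρ` is constant on the
blocks `[a * p, (a + 1) * p)`, and it is multiplied by `1 - 1 / t`, `t = (a + 1) * p`, from one
block to the next. After taking `p`-th powers the theorem becomes
`(t - p + b) / (t + b) < (1 - 1 / t) ^ p`, whose left side increases with `b`; it is enough to
treat `b = (p - 1) / 2`.
-/

open Finset Equiv.Perm
open scoped Nat

section CycleIndex

variable {K : Type*} [Field K]

/-- The contribution `∏ k, (w k / k) ^ mₖ / mₖ!` of the cycle type with `mₖ` cycles of length `k`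
to the cycle index of the symmetric group, each `k`-cycle being weighted by `w k`. The cycle type
is given as the multiset of all cycle lengths, fixed points included. -/
noncomputable def cycleWeight (w : ℕ → K) (s : Multiset ℕ) : K :=
  s.toFinsupp.prod fun k c => (w k / k) ^ c / c !

/-- The cycle index of the symmetric group on `n` points at `w`, as a sum over cycle types; it is
the average over all permutations of the product of `w k` over the cycle lengths `k`. -/
noncomputable def cycleIndex (w : ℕ → K) (n : ℕ) : K :=
  ∑ μ : n.Partition, cycleWeight w μ.parts

theorem cycleWeight_eq_prod_of_subset (w : ℕ → K) {s : Multiset ℕ} {t : Finset ℕ}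
    (hst : s.toFinset ⊆ t) :
    cycleWeight w s = ∏ k ∈ t, (w k / k) ^ s.count k / (s.count k)! := by
  rw [cycleWeight, Finsupp.prod_of_support_subset _ (by simpa using hst) _ (by simp)]
  simp only [Multiset.toFinsupp_apply]

theorem cycleWeight_eq_prod_map_mul (w : ℕ → K) (s : Multiset ℕ) :
    cycleWeight w s = (s.map w).prod * cycleWeight 1 s := by
  simp only [cycleWeight_eq_prod_of_subset _ Subset.rfl, prod_multiset_map_count,
    ← prod_mul_distrib, Pi.one_apply, div_pow, one_pow]
  exact prod_congr rfl fun k _ => by ring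

theorem cycleWeight_one_eq_inv (s : Multiset ℕ) :
    cycleWeight (1 : ℕ → K) s = ((s.prod * ∏ k ∈ s.toFinset, (s.count k)! : ℕ) : K)⁻¹ := by
  rw [cycleWeight_eq_prod_of_subset _ Subset.rfl, prod_multiset_count, ← prod_mul_distrib,
    Nat.cast_prod, ← prod_inv_distrib]
  exact prod_congr rfl fun k _ => by
    rw [Pi.one_apply, one_div, inv_pow, div_eq_mul_inv, Nat.cast_mul, Nat.cast_pow, mul_inv]

variable [CharZero K]

theorem mul_cycleWeight_cons (w : ℕ → K) {k : ℕ} (hk : k ≠ 0) (s : Multiset ℕ) :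
    (((k ::ₘ s).count k * k : ℕ) : K) * cycleWeight w (k ::ₘ s) = w k * cycleWeight w s := by
  have hk' : (k : K) ≠ 0 := Nat.cast_ne_zero.mpr hk
  have hcount : ((s.count k + 1 : ℕ) : K) ≠ 0 := Nat.cast_ne_zero.mpr (Nat.succ_ne_zero _)
  have hfact : ((s.count k)! : K) ≠ 0 := Nat.cast_ne_zero.mpr (Nat.factorial_ne_zero _)
  have hother : ∏ x ∈ (insert k s.toFinset).erase k,
        (w x / x) ^ (k ::ₘ s).count x / ((k ::ₘ s).count x)! =
      ∏ x ∈ (insert k s.toFinset).erase k, (w x / x) ^ s.count x / (s.count x)! :=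
    prod_congr rfl fun x hx => by rw [Multiset.count_cons_of_ne (ne_of_mem_erase hx)]
  rw [cycleWeight_eq_prod_of_subset w (t := insert k s.toFinset) (by simp),
    cycleWeight_eq_prod_of_subset w (subset_insert k s.toFinset),
    ← mul_prod_erase _ _ (mem_insert_self k _),
    ← mul_prod_erase _ (fun x => (w x / x) ^ s.count x / (s.count x)!) (mem_insert_self k _),
    hother, Multiset.count_cons_self, Nat.factorial_succ, Nat.cast_mul, Nat.cast_mul, pow_succ]
  field_simp

theorem count_mul_cycleWeight (w : ℕ → K) {k : ℕ} (hk : k ≠ 0) (s : Multiset ℕ) :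
    ((s.count k * k : ℕ) : K) * cycleWeight w s =
      if k ∈ s then w k * cycleWeight w (s.erase k) else 0 := by
  split_ifs with hks
  · obtain ⟨t, rfl⟩ := Multiset.exists_cons_of_mem hks
    rw [mul_cycleWeight_cons w hk, Multiset.erase_cons_head]
  · rw [Multiset.count_eq_zero_of_notMem hks, zero_mul, Nat.cast_zero, zero_mul]

theorem sum_count_mul_parts {n : ℕ} (μ : n.Partition) :
    ∑ k ∈ Icc 1 n, μ.parts.count k * k = n := by
  have hsub : μ.parts.toFinset ⊆ Icc 1 n := fun k hk => by
    rw [Multiset.mem_toFinset] at hk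
    exact mem_Icc.mpr ⟨μ.parts_pos hk, μ.le_of_mem_parts hk⟩
  conv_rhs => rw [← μ.parts_sum, sum_multiset_count_of_subset _ _ hsub]
  rfl

theorem mul_cycleIndex (w : ℕ → K) (n : ℕ) :
    n * cycleIndex w n = ∑ k ∈ Icc 1 n, w k * cycleIndex w (n - k) := by
  have hremove (k : ℕ) (hk : k ∈ Icc 1 n) :
      ∑ μ : n.Partition, ((μ.parts.count k * k : ℕ) : K) * cycleWeight w μ.parts =
        w k * cycleIndex w (n - k) := by
    obtain ⟨hk_pos, hk_le⟩ := mem_Icc.mp hk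
    simp only [count_mul_cycleWeight w (Nat.one_le_iff_ne_zero.mp hk_pos), cycleIndex, mul_sum]
    rw [← sum_filter, sum_subtype (p := fun μ => k ∈ μ.parts) _ (by simp)]
    exact Fintype.sum_equiv (Nat.Partition.partitionWithPartEquiv hk_pos hk_le) _ _ (by simp)
  rw [← sum_congr rfl hremove, sum_comm, cycleIndex, mul_sum]
  refine sum_congr rfl fun μ _ => ?_
  rw [← sum_mul, ← Nat.cast_sum, sum_count_mul_parts]

theorem cycleWeight_one_add_replicate {s : Multiset ℕ} (hs : 1 ∉ s) (r : ℕ) :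
    cycleWeight (1 : ℕ → K) (s + Multiset.replicate r 1) = cycleWeight 1 s / r ! := by
  induction r with
  | zero => simp
  | succ r ih =>
    have hcons := mul_cycleWeight_cons (1 : ℕ → K) one_ne_zero (s + Multiset.replicate r 1)
    simp only [Multiset.count_cons_self, Multiset.count_add, Multiset.count_replicate_self,
      Multiset.count_eq_zero_of_notMem hs, zero_add, mul_one, Pi.one_apply, one_mul] at hcons
    have hr : ((r + 1 : ℕ) : K) ≠ 0 := Nat.cast_ne_zero.mpr (Nat.succ_ne_zero r)
    rw [Multiset.replicate_succ, Multiset.add_cons, Nat.factorial_succ, mul_comm (r + 1),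
      Nat.cast_mul, ← div_div, ← ih, ← hcons, mul_div_cancel_left₀ _ hr]

theorem parts_eq_filter_add_replicate {n : ℕ} (μ : n.Partition) :
    μ.parts = μ.parts.filter (2 ≤ ·) +
      Multiset.replicate (n - (μ.parts.filter (2 ≤ ·)).sum) 1 := by
  have hones : μ.parts.filter (¬ 2 ≤ ·) = Multiset.replicate (μ.parts.count 1) 1 := by
    rw [← Multiset.filter_eq']
    exact Multiset.filter_congr fun k hk => by have := μ.parts_pos hk; omega
  have hsplit := Multiset.filter_add_not (2 ≤ ·) μ.parts
  rw [hones] at hsplit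
  have hsum := congrArg Multiset.sum hsplit
  rw [Multiset.sum_add, Multiset.sum_replicate, smul_eq_mul, mul_one, μ.parts_sum] at hsum
  rw [show n - (μ.parts.filter (2 ≤ ·)).sum = μ.parts.count 1 by omega, hsplit]

variable {α : Type*} [Fintype α] [DecidableEq α]

theorem partition_eq_iff_cycleType_eq {σ : Equiv.Perm α} {μ : (Fintype.card α).Partition} :
    σ.partition = μ ↔ σ.cycleType = μ.parts.filter (2 ≤ ·) := by
  rw [← filter_parts_partition_eq_cycleType]
  refine ⟨fun h => h ▸ rfl, fun h => Nat.Partition.ext ?_⟩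
  rw [parts_eq_filter_add_replicate, h, ← parts_eq_filter_add_replicate]

theorem natCast_card_filter_partition_eq (μ : (Fintype.card α).Partition) :
    (#{σ : Equiv.Perm α | σ.partition = μ} : K) =
      (Fintype.card α)! * cycleWeight 1 μ.parts := by
  have hparts := parts_eq_filter_add_replicate μ
  simp only [partition_eq_iff_cycleType_eq]
  set c := μ.parts.filter (2 ≤ ·)
  have htwo_le : ∀ k ∈ c, 2 ≤ k := fun k hk => (Multiset.mem_filter.mp hk).2
  have hsum : c.sum ≤ Fintype.card α := by
    conv_rhs => rw [← μ.parts_sum, hparts, Multiset.sum_add]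
    exact Nat.le_add_right _ _
  have hcard := card_of_cycleType_mul_eq α c
  rw [if_pos ⟨hsum, htwo_le⟩, mul_assoc] at hcard
  have hprod : ((c.prod * ∏ k ∈ c.toFinset, (c.count k)! : ℕ) : K) ≠ 0 := by
    refine Nat.cast_ne_zero.mpr (mul_ne_zero ?_ (prod_ne_zero_iff.mpr fun k _ => by positivity))
    exact Multiset.prod_ne_zero fun h => by simpa using htwo_le 0 h
  have hfact : ((Fintype.card α - c.sum)! : K) ≠ 0 := Nat.cast_ne_zero.mpr (Nat.factorial_ne_zero _)
  rw [hparts, cycleWeight_one_add_replicate fun h => by simpa using htwo_le 1 h,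
    cycleWeight_one_eq_inv, ← hcard, Nat.cast_mul, Nat.cast_mul]
  field_simp

theorem sum_perm_prod_map_parts (w : ℕ → K) :
    ∑ σ : Equiv.Perm α, (σ.partition.parts.map w).prod =
      (Fintype.card α)! * cycleIndex w (Fintype.card α) := by
  rw [← sum_fiberwise (g := partition), cycleIndex, mul_sum]
  refine sum_congr rfl fun μ _ => ?_
  have hconst : ∀ σ ∈ ({σ | σ.partition = μ} : Finset (Equiv.Perm α)),
      (σ.partition.parts.map w).prod = (μ.parts.map w).prod :=
    fun σ hσ => by rw [(mem_filter.mp hσ).2]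
  rw [sum_congr rfl hconst, sum_const, nsmul_eq_mul, natCast_card_filter_partition_eq,
    cycleWeight_eq_prod_map_mul w]
  ring

end CycleIndex

theorem coprime_orderOf_iff_forall_parts {α : Type*} [Fintype α] [DecidableEq α]
    (σ : Equiv.Perm α) (m : ℕ) :
    (orderOf σ).Coprime m ↔ ∀ k ∈ σ.partition.parts, k.Coprime m := by
  rw [← lcm_cycleType, parts_partition]
  constructor
  · intro h k hk
    obtain hk | hk := Multiset.mem_add.mp hk
    · exact h.coprime_dvd_left (Multiset.dvd_lcm hk)
    · rw [Multiset.eq_of_mem_replicate hk]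
      exact Nat.coprime_one_left m
  · intro h
    have hdvd : σ.cycleType.lcm ∣ σ.cycleType.prod :=
      Multiset.lcm_dvd.mpr fun _ => Multiset.dvd_prod
    refine Nat.Coprime.coprime_dvd_left hdvd (Nat.coprime_multiset_prod_left_iff.mpr ?_)
    exact fun k hk => h k (Multiset.mem_add.mpr (Or.inl hk))

theorem multiset_prod_map_boole {ι M : Type*} [CommMonoidWithZero M] (P : ι → Prop)
    [DecidablePred P] (s : Multiset ι) :
    (s.map fun i => if P i then (1 : M) else 0).prod = if ∀ i ∈ s, P i then 1 else 0 := by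
  induction s using Multiset.induction_on with
  | empty => simp
  | cons i s ih =>
    simp only [Multiset.map_cons, Multiset.prod_cons, ih, Multiset.forall_mem_cons, ite_and,
      ite_mul, one_mul, zero_mul]

theorem rho_eq_cycleIndex (n m : ℕ) :
    rho n m = cycleIndex (fun k => if k.Coprime m then 1 else 0) n := by
  have hsum := sum_perm_prod_map_parts (α := Fin n) fun k => if k.Coprime m then (1 : ℝ) else 0
  simp only [multiset_prod_map_boole, ← coprime_orderOf_iff_forall_parts, sum_boole,
    Fintype.card_fin] at hsum
  rw [rho, hsum, mul_div_cancel_left₀ _ (Nat.cast_ne_zero.mpr n.factorial_ne_zero)]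

theorem rho_pos (n m : ℕ) : 0 < rho n m := by
  have hone : (1 : Equiv.Perm (Fin n)) ∈ ({π | (orderOf π).Coprime m} : Finset _) := by simp
  exact div_pos (Nat.cast_pos.mpr (card_pos.mpr ⟨1, hone⟩)) (Nat.cast_pos.mpr n.factorial_pos)

theorem mul_rho (n m : ℕ) :
    n * rho n m = ∑ j ∈ range n with (n - j).Coprime m, rho j m := by
  simp only [rho_eq_cycleIndex, mul_cycleIndex, ite_mul, one_mul, zero_mul, sum_filter]
  refine sum_nbij' (n - ·) (n - ·) ?_ ?_ ?_ ?_ fun k hk => by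
    rw [Nat.sub_sub_self (mem_Icc.mp hk).2]
  all_goals
    intro k hk
    simp only [mem_Icc, mem_range] at hk ⊢
    omega

theorem add_mul_rho_add (n m : ℕ) :
    (n + m) * rho (n + m) m =
      n * rho n m + ∑ j ∈ Ico n (n + m) with (n + m - j).Coprime m, rho j m := by
  have hlow : ∑ j ∈ range n with (n + m - j).Coprime m, rho j m = n * rho n m := by
    rw [mul_rho]
    refine sum_congr (filter_congr fun j hj => ?_) fun _ _ => rfl
    rw [Nat.sub_add_comm (mem_range.mp hj).le, Nat.coprime_add_self_left]
  rw [← Nat.cast_add, mul_rho, ← hlow, sum_filter, sum_filter, sum_filter,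
    sum_range_add_sum_Ico _ (Nat.le_add_right n m)]

section Prime

variable {p : ℕ} (hp : p.Prime)
include hp

theorem rho_eq_one_of_lt {n : ℕ} (hn : n < p) : rho n p = 1 := by
  have hcoprime (π : Equiv.Perm (Fin n)) : (orderOf π).Coprime p := by
    have hdvd : orderOf π ∣ n ! := by simpa [Fintype.card_perm] using orderOf_dvd_card (x := π)
    have hndvd : ¬ p ∣ n ! := mt hp.dvd_factorial.mp hn.not_ge
    exact (hp.coprime_iff_not_dvd.mpr hndvd).symm.coprime_dvd_left hdvd
  rw [rho, filter_true_of_mem fun π _ => hcoprime π, card_univ, Fintype.card_perm, Fintype.card_fin,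
    div_self (Nat.cast_ne_zero.mpr n.factorial_ne_zero)]

theorem add_mul_rho_add_of_prime (n : ℕ) :
    (n + p) * rho (n + p) p = n * rho n p + ∑ j ∈ Ico (n + 1) (n + p), rho j p := by
  have hfilter : {j ∈ Ico n (n + p) | (n + p - j).Coprime p} = Ico (n + 1) (n + p) := by
    ext j
    simp only [mem_filter, mem_Ico]
    constructor
    · rintro ⟨⟨hnj, hjp⟩, hcop⟩
      refine ⟨Nat.lt_of_le_of_ne hnj ?_, hjp⟩
      rintro rfl
      simp [hp.ne_one] at hcop
    · rintro ⟨hnj, hjp⟩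
      exact ⟨⟨by omega, hjp⟩, (Nat.coprime_of_lt_prime (by omega) (by omega) hp).symm⟩
  rw [add_mul_rho_add, hfilter]

theorem mul_rho_succ_sub_rho (n : ℕ) :
    (n + p + 1) * (rho (n + p + 1) p - rho (n + p) p) = n * (rho (n + 1) p - rho n p) := by
  have hn := add_mul_rho_add_of_prime hp n
  have hsucc := add_mul_rho_add_of_prime hp (n + 1)
  have hwindow : ∑ j ∈ Ico (n + 1) (n + p), rho j p + rho (n + p) p =
      rho (n + 1) p + ∑ j ∈ Ico (n + 1 + 1) (n + p + 1), rho j p := by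
    have := hp.pos
    rw [← sum_Ico_succ_top (by omega),
      ← sum_eq_sum_Ico_succ_bot (by omega) fun j => rho j p]
  rw [Nat.cast_succ, add_right_comm n 1 p] at hsucc
  linear_combination hsucc - hn - hwindow

theorem rho_succ_of_not_dvd (n : ℕ) (hn : ¬ p ∣ n + 1) : rho (n + 1) p = rho n p := by
  induction n using Nat.strong_induction_on with
  | _ n ih =>
    obtain hlt | hle := lt_or_ge (n + 1) p
    · rw [rho_eq_one_of_lt hp hlt, rho_eq_one_of_lt hp (by omega)]
    · have hne : n + 1 ≠ p := fun h => hn (h ▸ dvd_rfl)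
      obtain ⟨q, rfl⟩ := Nat.exists_eq_add_of_le' (show p ≤ n by omega)
      have hq : rho (q + 1) p = rho q p :=
        ih q (by have := hp.pos; omega) (by rwa [add_right_comm, Nat.dvd_add_self_right] at hn)
      have hstep := mul_rho_succ_sub_rho hp q
      rw [hq, sub_self, mul_zero] at hstep
      have hpos : (q + p + 1 : ℝ) ≠ 0 := by positivity
      exact sub_eq_zero.mp ((mul_eq_zero.mp hstep).resolve_left hpos)

theorem rho_mul_add_of_lt (a : ℕ) {b : ℕ} (hb : b < p) : rho (a * p + b) p = rho (a * p) p := by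
  induction b with
  | zero => rfl
  | succ b ih =>
    have hndvd : ¬ p ∣ a * p + b + 1 := by
      rw [add_assoc, Nat.dvd_add_right (dvd_mul_left p a)]
      exact Nat.not_dvd_of_pos_of_lt b.succ_pos hb
    rw [← add_assoc, rho_succ_of_not_dvd hp _ hndvd, ih (by omega)]

theorem rho_succ_mul_add_of_lt (a : ℕ) {b : ℕ} (hb : b < p) :
    rho ((a + 1) * p + b) p = (1 - 1 / ((a + 1) * p)) * rho (a * p + b) p := by
  have hblock : ∑ j ∈ Ico (a * p + 1) (a * p + p), rho j p = (p - 1) * rho (a * p) p := by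
    rw [sum_congr rfl (g := fun _ => rho (a * p) p), sum_const, Nat.card_Ico, nsmul_eq_mul,
      Nat.add_sub_add_left, Nat.cast_sub hp.one_le, Nat.cast_one]
    intro j hj
    obtain ⟨hlo, hhi⟩ := mem_Ico.mp hj
    obtain ⟨i, rfl⟩ := Nat.exists_eq_add_of_le (show a * p ≤ j by omega)
    exact rho_mul_add_of_lt hp a (by omega)
  have hstep := add_mul_rho_add_of_prime hp (a * p)
  rw [hblock] at hstep
  have hp0 : (p : ℝ) ≠ 0 := Nat.cast_ne_zero.mpr hp.ne_zero
  have ha : (a + 1 : ℝ) ≠ 0 := Nat.cast_add_one_ne_zero a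
  rw [rho_mul_add_of_lt hp _ hb, rho_mul_add_of_lt hp _ hb, add_one_mul a p]
  push_cast at hstep
  field_simp
  linear_combination hstep

theorem one_sub_totient_div_self : 1 - (p.totient : ℝ) / p = (p : ℝ)⁻¹ := by
  have hp0 : (p : ℝ) ≠ 0 := Nat.cast_ne_zero.mpr hp.ne_zero
  rw [Nat.totient_prime hp, Nat.cast_sub hp.one_le, Nat.cast_one]
  field_simp
  ring

end Prime

/-- With `s = (n - 1) / 2`, the left side is the telescoping product of the `1 - 1 / (t + s - i)`
over `i < n`, whose denominators average to `t`. -/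
theorem one_sub_div_lt_one_sub_inv_pow {t : ℝ} (ht : 1 ≤ t) {n : ℕ} (hn : 2 ≤ n) :
    1 - 2 * n / (2 * t + n - 1) < (1 - 1 / t) ^ n := by
  have ht0 : 0 < t := by linarith
  have hbase : 0 ≤ 1 - 1 / t := sub_nonneg.mpr ((div_le_one ht0).mpr ht)
  induction n, hn using Nat.le_induction with
  | base =>
    have hgap : (1 - 1 / t) ^ 2 - (1 - 2 * (2 : ℕ) / (2 * t + (2 : ℕ) - 1)) =
        1 / (t ^ 2 * (2 * t + 1)) := by
      rw [Nat.cast_ofNat, show 2 * t + 2 - 1 = 2 * t + 1 by ring]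
      field_simp
      ring
    exact sub_pos.mp (hgap ▸ by positivity)
  | succ n hn ih =>
    have hn2 : (2 : ℝ) ≤ n := by exact_mod_cast hn
    have hD : 0 < 2 * t + n - 1 := by linarith
    have hgap : (1 - 2 * n / (2 * t + n - 1)) * (1 - 1 / t) - (1 - 2 * (n + 1) / (2 * t + n)) =
        2 * n * (n + 1) / (2 * t * (2 * t + n - 1) * (2 * t + n)) := by
      have := hD.ne'
      field_simp
      ring
    have hgap_pos : 0 < 2 * n * (n + 1) / (2 * t * (2 * t + n - 1) * (2 * t + n)) := by positivity
    calc 1 - 2 * (n + 1 : ℕ) / (2 * t + (n + 1 : ℕ) - 1)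
        = 1 - 2 * (n + 1) / (2 * t + n) := by push_cast; ring
      _ < (1 - 2 * n / (2 * t + n - 1)) * (1 - 1 / t) := sub_pos.mp (hgap ▸ hgap_pos)
      _ ≤ (1 - 1 / t) ^ n * (1 - 1 / t) := mul_le_mul_of_nonneg_right ih.le hbase
      _ = (1 - 1 / t) ^ (n + 1) := (pow_succ _ _).symm

theorem rpow_inv_lt_mul_rpow_inv {x y c : ℝ} {n : ℕ} (hx : 0 ≤ x) (hy : 0 ≤ y) (hc : 0 ≤ c)
    (hn : n ≠ 0) (h : x < c ^ n * y) : x ^ (n⁻¹ : ℝ) < c * y ^ (n⁻¹ : ℝ) := by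
  calc x ^ (n⁻¹ : ℝ) < (c ^ n * y) ^ (n⁻¹ : ℝ) := Real.rpow_lt_rpow hx h (by positivity)
    _ = c * y ^ (n⁻¹ : ℝ) := by
      rw [Real.mul_rpow (pow_nonneg hc n) hy, Real.pow_rpow_inv_natCast hc hn]

theorem f_eq_of_prime (n : ℕ) {p : ℕ} (hp : p.Prime) :
    f n p = rho n p * (n / p : ℝ) ^ (p⁻¹ : ℝ) := by
  rw [f, one_sub_totient_div_self hp]

theorem mul_add_div_lt_one_sub_inv_pow_mul {p : ℕ} (hp : 2 ≤ p) (a : ℕ) {b : ℕ}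
    (hb : b ≤ (p - 1) / 2) :
    ((a * p + b : ℕ) / p : ℝ) < (1 - 1 / ((a + 1) * p)) ^ p * (((a + 1) * p + b : ℕ) / p) := by
  have hp2 : (2 : ℝ) ≤ p := by exact_mod_cast hp
  have hb2 : (2 * b + 1 : ℝ) ≤ p := by exact_mod_cast (by omega : 2 * b + 1 ≤ p)
  push_cast
  set t : ℝ := (a + 1) * p with ht
  have hpt : p ≤ t := le_mul_of_one_le_left (by linarith) (by linarith [a.cast_nonneg (α := ℝ)])
  have hden : 0 < t + b := by positivity
  have hstart : (a * p + b : ℝ) = (1 - 2 * p / (2 * t + 2 * b)) * (t + b) := by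
    field_simp
    rw [ht]
    ring
  have hpow : 1 - 2 * p / (2 * t + 2 * b) < (1 - 1 / t) ^ p :=
    calc 1 - 2 * p / (2 * t + 2 * b) ≤ 1 - 2 * p / (2 * t + p - 1) := by
          gcongr
          linarith
      _ < (1 - 1 / t) ^ p := one_sub_div_lt_one_sub_inv_pow (by linarith) hp
  rw [hstart, mul_div_assoc]
  gcongr

theorem stmt_7 (p : ℕ) (hp : p.Prime) (b : ℕ) (hb : b ≤ (p - 1) / 2) :
    ∀ a : ℕ, f (a * p + b) p < f ((a + 1) * p + b) p := by
  intro a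
  have hbp : b < p := by have := hp.pos; omega
  have hfactor : 0 ≤ 1 - 1 / ((a + 1) * p : ℝ) := by
    rw [one_div, sub_nonneg]
    refine inv_le_one_of_one_le₀ ?_
    exact_mod_cast Nat.mul_pos a.succ_pos hp.pos
  have hroot := rpow_inv_lt_mul_rpow_inv (by positivity) (by positivity) hfactor hp.ne_zero
    (mul_add_div_lt_one_sub_inv_pow_mul hp.two_le a hb)
  calc f (a * p + b) p
      = rho (a * p + b) p * ((a * p + b : ℕ) / p : ℝ) ^ (p⁻¹ : ℝ) := f_eq_of_prime _ hp
    _ < rho (a * p + b) p *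
          ((1 - 1 / ((a + 1) * p)) * (((a + 1) * p + b : ℕ) / p : ℝ) ^ (p⁻¹ : ℝ)) :=
        mul_lt_mul_of_pos_left hroot (rho_pos _ p)
    _ = f ((a + 1) * p + b) p := by
        rw [f_eq_of_prime _ hp, rho_succ_mul_add_of_lt hp a hbp]
        ring
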